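/- Let T be any [Δ,k]-transversal design where k, Δ ≥ 2 and Δ ≤ k. Let U be any block of T and let t_1, t_2, …, t_Δ be any Δ vertices of T (each a node or a block, called target-nodes or target-blocks as appropriate), where there may be repetitions. Then for each i = 1, 2, …, Δ there is a path π_i in T from U to t_i of length at most 7, so that the paths π_1, …, π_Δ are pairwise edge-disjoint. -/

import Mathlib

/-- The bipartite graph on `ν ⊕ β` (nodes on the left, blocks on the right)
determined by the adjacency relation `adj`. -/
def bipGraph {ν β : Type} (adj : ν → β → Prop) : SimpleGraph (ν ⊕ β) :=
  SimpleGraph.fromRel fun u v => ∃ x b, u = Sum.inl x ∧ v = Sum.inr b ∧ adj x b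

/-- A `[Δ,k]`-transversal design: the nodes form a set of size `Δ * k` partitioned
into `Δ` groups (the fibres of `group`), each of size `k`; there are `k ^ 2` blocks;
every block is adjacent to exactly one node of each group; and every pair of nodes
lying in distinct groups is adjacent to exactly one common block (the block
*generated* by the pair). -/
structure IsTransversalDesign {ν β : Type} (Δ k : ℕ)
    (group : ν → Fin Δ) (adj : ν → β → Prop) : Prop where
  two_le_k : 2 ≤ k
  two_le_Δ : 2 ≤ Δ
  groupCard : ∀ i : Fin Δ, Nat.card {x : ν // group x = i} = k
  blockCard : Nat.card β = k ^ 2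
  blockMeets : ∀ (b : β) (i : Fin Δ), ∃! x : ν, group x = i ∧ adj x b
  pairGen : ∀ x y : ν, group x ≠ group y → ∃! b : β, adj x b ∧ adj y b

/-- A family of walks (with sources `s i` and destinations `t i`) is pairwise
internally-disjoint if every vertex which is a source or destination of some member
of the family appears on members of the family only as their source or destination,
and every vertex which is not a source or destination of any member of the family
lies on at most one member of the family. -/
def PairwiseInternallyDisjoint {V ι : Type} {G : SimpleGraph V} {s t : ι → V}
    (p : (i : ι) → G.Walk (s i) (t i)) : Prop :=
  (∀ i j : ι, ∀ v : V, v ∈ (p i).support → (v = s j ∨ v = t j) → v = s i ∨ v = t i) ∧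
  (∀ i j : ι, ∀ v : V, (∀ l : ι, v ≠ s l ∧ v ≠ t l) →
    v ∈ (p i).support → v ∈ (p j).support → i = j)

/-- A family of walks is pairwise edge-disjoint if every edge lies on at most one
member of the family. -/
def PairwiseEdgeDisjoint {V ι : Type} {G : SimpleGraph V} {s t : ι → V}
    (p : (i : ι) → G.Walk (s i) (t i)) : Prop :=
  ∀ i j : ι, ∀ e : Sym2 V, e ∈ (p i).edges → e ∈ (p j).edges → i = j

/-!
Let `x i` be the node of `U` in group `i`. The path ending at `t i` leaves `U` through a node of
its own, so the targets have to be matched with the nodes of `U`; after reindexing, `t i` is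
matched with `x i`. Two nodes of `U` have only the block `U` in common, hence the *fans*, consisting
of the edge from `U` to `x i` and the edges at the other blocks through `x i`, are pairwise
disjoint. Inside its fan, `x i` is within distance two of every node outside group `i` and off `U`.

Choose the matching of largest total weight, where targets equal to or adjacent to `x i` (the
*direct* ones) weigh most and other nodes of group `i` weigh least. Every direct target is reached
inside its fan. If there are indirect targets left, there are three cases.
* If there is only one, its path may use all edges not used by the direct paths.
* If an indirect target lies in the group it is matched with, then by maximality so do all the
  others. They are reached inside their fans, whereas the first one is reached through a block
  avoiding all nodes of `U`, which exists because `Δ ≤ k`.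
* Otherwise, the indirect targets off `U` which are nodes are reached inside their fans. For each of
  the others choose a block `c i` equal or adjacent to it; since `Δ ≤ k`, the targets equal to the
  same node of `U` can be given distinct blocks. Move along the fan to the node of `c i` in the
  group of the next indirect target in a cyclic order, and enter `c i` there.
-/

open Function

lemma disjoint_rel_iff {α β : Type*} {r s : α → β → Prop} :
    Disjoint r s ↔ ∀ a b, r a b → ¬ s a b := by
  simp only [Pi.disjoint_iff, Prop.disjoint_iff, not_and]

lemma exists_perm_swap_le {ι M : Type*} [Finite ι] [AddCommMonoid M] [LinearOrder M]
    [IsOrderedCancelAddMonoid M] (w : ι → ι → M) :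
    ∃ σ : Equiv.Perm ι, ∀ i j, i ≠ j → w i (σ j) + w j (σ i) ≤ w i (σ i) + w j (σ j) := by
  classical
  have := Fintype.ofFinite ι
  obtain ⟨σ, hσ⟩ := Finite.exists_max fun σ : Equiv.Perm ι => ∑ i, w i (σ i)
  refine ⟨σ, fun i j hij => ?_⟩
  have hswap := hσ (σ * Equiv.swap i j)
  rw [← Finset.sum_add_sum_compl {i, j}, ← Finset.sum_add_sum_compl {i, j} fun l => w l (σ l),
    Finset.sum_pair hij, Finset.sum_pair hij] at hswap
  have hrest : ∑ l ∈ {i, j}ᶜ, w l ((σ * Equiv.swap i j) l) = ∑ l ∈ {i, j}ᶜ, w l (σ l) := by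
    refine Finset.sum_congr rfl fun l hl => ?_
    simp only [Finset.mem_compl, Finset.mem_insert, Finset.mem_singleton, not_or] at hl
    rw [Equiv.Perm.mul_apply, Equiv.swap_apply_of_ne_of_ne hl.1 hl.2]
  rw [hrest] at hswap
  simpa using le_of_add_le_add_right hswap

lemma exists_perm_mem_and_ne {α : Type*} {s : Set α} (hc : s.Countable) (hs : s.Nontrivial) :
    ∃ ρ : Equiv.Perm α, ∀ a ∈ s, ρ a ∈ s ∧ ρ a ≠ a := by
  obtain ⟨ρ, hρ, -⟩ := hc.exists_cycleOn
  exact ⟨ρ, fun a ha => ⟨hρ.1.mapsTo ha, hρ.apply_ne hs ha⟩⟩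

section BipGraph

variable {ν β : Type} {r s : ν → β → Prop} {n m : ν} {b c : β}

@[simp] lemma bipGraph_adj_inl_inr : (bipGraph r).Adj (.inl n) (.inr b) ↔ r n b := by
  simp [bipGraph]

@[simp] lemma not_bipGraph_adj_inl_inl : ¬ (bipGraph r).Adj (.inl n) (.inl m) := by
  simp [bipGraph]

@[simp] lemma not_bipGraph_adj_inr_inr : ¬ (bipGraph r).Adj (.inr b) (.inr c) := by
  simp [bipGraph]

@[simp] lemma bipGraph_adj_inr_inl : (bipGraph r).Adj (.inr b) (.inl n) ↔ r n b := by
  rw [SimpleGraph.adj_comm, bipGraph_adj_inl_inr]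

lemma bipGraph_mono (h : r ≤ s) : bipGraph r ≤ bipGraph s := by
  rintro (n | b) (m | c) hadj <;> simp only [bipGraph_adj_inl_inr, bipGraph_adj_inr_inl,
    not_bipGraph_adj_inl_inl, not_bipGraph_adj_inr_inr] at hadj ⊢
  exacts [h _ _ hadj, h _ _ hadj]

lemma disjoint_bipGraph (h : Disjoint r s) : Disjoint (bipGraph r) (bipGraph s) := by
  rw [disjoint_rel_iff] at h
  rw [SimpleGraph.disjoint_left]
  rintro (n | b) (m | c) hr hs <;> simp only [bipGraph_adj_inl_inr, bipGraph_adj_inr_inl,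
    not_bipGraph_adj_inl_inl, not_bipGraph_adj_inr_inr] at hr hs
  exacts [h _ _ hr hs, h _ _ hr hs]

@[simp] lemma edist_inl_inl_le_one : (bipGraph r).edist (.inl n) (.inl m) ≤ 1 ↔ n = m := by
  simp [SimpleGraph.edist_le_one_iff_adj_or_eq]

@[simp] lemma edist_inl_inr_le_one : (bipGraph r).edist (.inl n) (.inr b) ≤ 1 ↔ r n b := by
  simp [SimpleGraph.edist_le_one_iff_adj_or_eq]

@[simp] lemma edist_inr_inl_le_one : (bipGraph r).edist (.inr b) (.inl n) ≤ 1 ↔ r n b := by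
  simp [SimpleGraph.edist_le_one_iff_adj_or_eq]

@[simp] lemma edist_inr_inr_le_one : (bipGraph r).edist (.inr b) (.inr c) ≤ 1 ↔ b = c := by
  simp [SimpleGraph.edist_le_one_iff_adj_or_eq]

lemma edist_inl_inl_le_two (hn : r n b) (hm : r m b) :
    (bipGraph r).edist (.inl n) (.inl m) ≤ 2 :=
  calc (bipGraph r).edist (.inl n) (.inl m)
      ≤ (bipGraph r).edist (.inl n) (.inr b) + (bipGraph r).edist (.inr b) (.inl m) :=
        SimpleGraph.edist_triangle
    _ ≤ 1 + 1 := add_le_add (edist_inl_inr_le_one.2 hn) (edist_inr_inl_le_one.2 hm)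
    _ = 2 := one_add_one_eq_two

end BipGraph

section Routing

variable {ν β ι : Type} {adj : ν → β → Prop} {U : β} {l : ℕ} {t : ι → ν ⊕ β}
  {r : ι → ν → β → Prop}

/-- A routing from the block `U` to the targets `t i`: pairwise disjoint sets of edges, the `i`-th
of which joins `U` to `t i` within distance `l`. Sets of edges are encoded as subrelations `r i` of
the incidence relation `adj`. -/
structure IsRouting (adj : ν → β → Prop) (U : β) (l : ℕ) (t : ι → ν ⊕ β)
    (r : ι → ν → β → Prop) : Prop where
  le_adj : ∀ i, r i ≤ adj
  disjoint : Pairwise (Disjoint on r)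
  edist_le : ∀ i, (bipGraph (r i)).edist (.inr U) (t i) ≤ l

lemma IsRouting.of_comp_perm {σ : Equiv.Perm ι} (h : IsRouting adj U l (t ∘ σ) r) :
    IsRouting adj U l t (r ∘ σ.symm) where
  le_adj i := h.le_adj _
  disjoint := h.disjoint.comp_of_injective σ.symm.injective
  edist_le i := by simpa using h.edist_le (σ.symm i)

lemma IsRouting.exists_paths (h : IsRouting adj U l t r) :
    ∃ p : (i : ι) → (bipGraph adj).Walk (Sum.inr U) (t i),
      (∀ i, (p i).IsPath ∧ (p i).length ≤ l) ∧ PairwiseEdgeDisjoint p := by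
  have hpath (i : ι) : ∃ p : (bipGraph (r i)).Walk (.inr U) (t i), p.IsPath ∧ p.length ≤ l := by
    have hreach := SimpleGraph.reachable_of_edist_ne_top
      (ne_top_of_le_ne_top (ENat.natCast_ne_top l) (h.edist_le i))
    obtain ⟨p, hp, hlen⟩ := hreach.exists_path_of_dist
    refine ⟨p, hp, ?_⟩
    have hle := h.edist_le i
    rw [← hreach.coe_dist_eq_edist, ← hlen] at hle
    exact_mod_cast hle
  choose p hp hlen using hpath
  refine ⟨fun i => (p i).mapLe (bipGraph_mono (h.le_adj i)),
    fun i => ⟨(hp i).mapLe _, by simpa using hlen i⟩, fun i j e hi hj => ?_⟩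
  rw [SimpleGraph.Walk.edges_mapLe_eq_edges] at hi hj
  by_contra hij
  have hdisj := SimpleGraph.disjoint_edgeSet.2 (disjoint_bipGraph (h.disjoint hij))
  exact Set.disjoint_left.1 hdisj ((p i).edges_subset_edgeSet hi) ((p j).edges_subset_edgeSet hj)

end Routing

namespace IsTransversalDesign

variable {ν β : Type} {Δ k : ℕ} {group : ν → Fin Δ} {adj : ν → β → Prop}

/-- The node of the block `b` in the group `i`. -/
noncomputable def nodeAt (hT : IsTransversalDesign Δ k group adj) (b : β) (i : Fin Δ) : ν :=
  (hT.blockMeets b i).choose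

variable (hT : IsTransversalDesign Δ k group adj)

lemma group_nodeAt (b : β) (i : Fin Δ) : group (hT.nodeAt b i) = i :=
  (hT.blockMeets b i).choose_spec.1.1

lemma adj_nodeAt (b : β) (i : Fin Δ) : adj (hT.nodeAt b i) b :=
  (hT.blockMeets b i).choose_spec.1.2

lemma eq_nodeAt {b : β} {n : ν} (h : adj n b) : n = hT.nodeAt b (group n) :=
  (hT.blockMeets b (group n)).choose_spec.2 n ⟨rfl, h⟩

lemma nodeAt_injective (b : β) : Injective (hT.nodeAt b) :=
  LeftInverse.injective (hT.group_nodeAt b)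

section

include hT

lemma eq_of_adj_of_group_eq {b : β} {n m : ν} (hn : adj n b) (hm : adj m b)
    (h : group n = group m) : n = m := by
  rw [hT.eq_nodeAt hn, hT.eq_nodeAt hm, h]

lemma block_unique {n m : ν} {b c : β} (hnm : n ≠ m) (hnb : adj n b) (hmb : adj m b)
    (hnc : adj n c) (hmc : adj m c) : b = c :=
  (hT.pairGen n m fun h => hnm (hT.eq_of_adj_of_group_eq hnb hmb h)).unique
    ⟨hnb, hmb⟩ ⟨hnc, hmc⟩

lemma eq_of_adj_nodeAt {U b : β} (hb : b ≠ U) {i j : Fin Δ} (hi : adj (hT.nodeAt U i) b)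
    (hj : adj (hT.nodeAt U j) b) : i = j := by
  by_contra hij
  exact hb (hT.block_unique ((hT.nodeAt_injective U).ne hij) hi hj
    (hT.adj_nodeAt U i) (hT.adj_nodeAt U j))

lemma exists_group_ne (i : Fin Δ) : ∃ g, g ≠ i := by
  have : Nontrivial (Fin Δ) := Fin.nontrivial_iff_two_le.2 hT.two_le_Δ
  exact exists_ne i

lemma exists_not_adj (b : β) (i : Fin Δ) : ∃ n, group n = i ∧ ¬ adj n b := by
  have hcard : 1 < Nat.card {n : ν // group n = i} := by
    rw [hT.groupCard i]
    exact hT.two_le_k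
  have := Nat.finite_of_card_ne_zero (zero_lt_one.trans hcard).ne'
  have := Finite.one_lt_card_iff_nontrivial.1 hcard
  obtain ⟨⟨n, rfl⟩, hne⟩ := exists_ne (⟨hT.nodeAt b i, hT.group_nodeAt b i⟩ : {n // group n = i})
  exact ⟨n, rfl, fun h => hne (Subtype.ext (hT.eq_nodeAt h))⟩

lemma card_blocks_through (n : ν) : Nat.card {b // adj n b} = k := by
  obtain ⟨g, hg⟩ := hT.exists_group_ne (group n)
  rw [← hT.groupCard g]
  refine Nat.card_eq_of_bijective
    (fun b => (⟨hT.nodeAt b g, hT.group_nodeAt b g⟩ : {m // group m = g})) ⟨?_, ?_⟩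
  · intro b c hbc
    have hnode : hT.nodeAt b.1 g = hT.nodeAt c.1 g := congrArg Subtype.val hbc
    have hne : n ≠ hT.nodeAt b.1 g := fun h =>
      hg ((hT.group_nodeAt b.1 g).symm.trans (congrArg group h.symm))
    exact Subtype.ext (hT.block_unique hne b.2 (hT.adj_nodeAt _ _) c.2 (hnode ▸ hT.adj_nodeAt _ _))
  · rintro ⟨m, rfl⟩
    obtain ⟨b, ⟨hnb, hmb⟩, -⟩ := hT.pairGen n m hg.symm
    exact ⟨⟨b, hnb⟩, Subtype.ext (hT.eq_nodeAt hmb).symm⟩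

lemma finite_blocks_through (n : ν) : Finite {b // adj n b} :=
  Nat.finite_of_card_ne_zero (by
    rw [hT.card_blocks_through n]
    exact (zero_lt_two.trans_le hT.two_le_k).ne')

lemma exists_adj_and_not_adj {n m : ν} (hnm : n ≠ m) : ∃ b, adj n b ∧ ¬ adj m b := by
  have := hT.finite_blocks_through n
  have : Nontrivial {b // adj n b} := Finite.one_lt_card_iff_nontrivial.1 (by
    rw [hT.card_blocks_through n]
    exact hT.two_le_k)
  obtain ⟨⟨b, hb⟩, ⟨c, hc⟩, hbc⟩ := exists_pair_ne {b // adj n b}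
  by_contra! hall
  exact hbc (Subtype.ext (hT.block_unique hnm hb (hall b hb) hc (hall c hc)))

lemma exists_injective_blocks {l : ℕ} (hl : l ≤ k) {n : ν} {b : β} (hb : adj n b) (i : Fin l) :
    ∃ f : Fin l → β, Injective f ∧ f i = b ∧ ∀ j, adj n (f j) := by
  classical
  have := hT.finite_blocks_through n
  let e : Fin l ↪ {b // adj n b} := (Fin.castLEEmb hl).trans
    (Finite.equivFinOfCardEq (hT.card_blocks_through n)).symm.toEmbedding
  refine ⟨fun j => e.setValue i ⟨b, hb⟩ j,
    Subtype.val_injective.comp (e.setValue i ⟨b, hb⟩).injective, ?_,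
    fun j => (e.setValue i ⟨b, hb⟩ j).2⟩
  simp only [Embedding.setValue_eq]

-- The `k` blocks through `w` would otherwise meet `U` in distinct nodes outside the group of `w`,
-- and there are only `Δ - 1` of these.
lemma exists_block_disjoint_of_not_adj (hΔk : Δ ≤ k) {U : β} {w : ν} (hw : ¬ adj w U) :
    ∃ c, adj w c ∧ ∀ i, ¬ adj (hT.nodeAt U i) c := by
  by_contra! hall
  choose f hf using fun c : {c // adj w c} => hall c.1 c.2
  have hne (n : ν) (hn : adj n U) : n ≠ w := fun h => hw (h ▸ hn)
  have hfne (c : {c // adj w c}) : f c ≠ group w := fun h => by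
    have hgroup : group (hT.nodeAt U (f c)) = group w := by rw [hT.group_nodeAt, h]
    exact hne _ (hT.adj_nodeAt U _) (hT.eq_of_adj_of_group_eq (hf c) c.2 hgroup)
  have hinj : Injective fun c => (⟨f c, hfne c⟩ : {i // i ≠ group w}) := fun b c hbc => by
    have hbc : f b = f c := congrArg Subtype.val hbc
    exact Subtype.ext (hT.block_unique (hne _ (hT.adj_nodeAt U (f b))) (hf b) b.2
      (hbc ▸ hf c) c.2)
  have hcard := Nat.card_le_card_of_injective _ hinj
  have hlt : Nat.card {i // i ≠ group w} < Nat.card (Fin Δ) :=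
    Finite.card_subtype_lt (x := group w) (by simp)
  rw [hT.card_blocks_through] at hcard
  rw [Nat.card_fin] at hlt
  omega

end

/-- A target is direct for the index `i` if it is equal or adjacent to the node of `U` in the
group `i`. -/
def IsDirect (hT : IsTransversalDesign Δ k group adj) (U : β) (i : Fin Δ) (v : ν ⊕ β) : Prop :=
  (bipGraph adj).edist (.inl (hT.nodeAt U i)) v ≤ 1

@[simp] lemma isDirect_inl {U : β} {i : Fin Δ} {n : ν} :
    hT.IsDirect U i (.inl n) ↔ hT.nodeAt U i = n :=
  edist_inl_inl_le_one

@[simp] lemma isDirect_inr {U : β} {i : Fin Δ} {b : β} :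
    hT.IsDirect U i (.inr b) ↔ adj (hT.nodeAt U i) b :=
  edist_inl_inr_le_one

/-- The indices whose targets are not direct for them. -/
def indirect (hT : IsTransversalDesign Δ k group adj) (U : β) (t : Fin Δ → ν ⊕ β) : Set (Fin Δ) :=
  {i | ¬ hT.IsDirect U i (t i)}

section Matching

variable {U : β} {t : Fin Δ → ν ⊕ β} {i : Fin Δ} {v : ν ⊕ β}

open Classical in
/-- The weight of matching the target `v` with the index `i`. A direct target outweighs any two
indirect ones, and the node of `U` in group `i` outweighs any direct block together with any
indirect target. -/
noncomputable def weight (hT : IsTransversalDesign Δ k group adj) (U : β) (i : Fin Δ) :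
    ν ⊕ β → ℕ
  | .inl n => if hT.nodeAt U i = n then 5 else if group n = i then 0 else 1
  | .inr b => if adj (hT.nodeAt U i) b then 3 else 1

lemma three_le_weight (h : hT.IsDirect U i v) : 3 ≤ hT.weight U i v := by
  rcases v with n | b
  · simp [weight, hT.isDirect_inl.1 h]
  · simp [weight, hT.isDirect_inr.1 h]

lemma weight_le_one (h : ¬ hT.IsDirect U i v) : hT.weight U i v ≤ 1 := by
  rcases v with n | b
  · rw [isDirect_inl] at h
    simp only [weight, h, if_false]
    split_ifs <;> simp
  · rw [isDirect_inr] at h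
    simp [weight, h]

lemma one_le_weight (h : ∀ n, v = .inl n → group n ≠ i) : 1 ≤ hT.weight U i v := by
  rcases v with n | b
  · simp only [weight, h n rfl, if_false]
    split_ifs <;> simp
  · simp only [weight]
    split_ifs <;> simp

/-- The properties of a matching of largest weight between targets and nodes of `U`, the targets
being indexed such that `t i` is matched with the node of `U` in group `i`. -/
structure IsMatched (hT : IsTransversalDesign Δ k group adj) (U : β) (t : Fin Δ → ν ⊕ β) :
    Prop where
  not_isDirect : ∀ ⦃i j⦄, i ∈ hT.indirect U t → j ∈ hT.indirect U t → ¬ hT.IsDirect U j (t i)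
  ne_block : ∀ ⦃i j⦄, i ∈ hT.indirect U t → t i = .inl (hT.nodeAt U j) → ∀ b, t j ≠ .inr b
  group_eq : ∀ ⦃i n⦄, i ∈ hT.indirect U t → t i = .inl n → group n = i →
    ∀ j ∈ hT.indirect U t, ∃ m, t j = .inl m ∧ group m = i

lemma isMatched_of_weight_swap_le
    (h : ∀ i j, i ≠ j → hT.weight U i (t j) + hT.weight U j (t i) ≤
      hT.weight U i (t i) + hT.weight U j (t j)) : hT.IsMatched U t where
  not_isDirect i j hi hj hij := by
    have hne : i ≠ j := by rintro rfl; exact hi hij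
    have := h i j hne
    have := hT.three_le_weight hij
    have := hT.weight_le_one hi
    have := hT.weight_le_one hj
    omega
  ne_block i j hi hti b htj := by
    have hne : i ≠ j := by rintro rfl; simp [hti] at htj
    have := h i j hne
    have := hT.weight_le_one hi
    have : hT.weight U j (t i) = 5 := by simp [hti, weight]
    have : hT.weight U j (t j) ≤ 3 := by
      simp only [htj, weight]
      split_ifs <;> simp
    omega
  group_eq i n hi hti hn j hj := by
    by_contra! hcon
    have hne : i ≠ j := by rintro rfl; exact hcon n hti hn
    have := h i j hne
    have := hT.weight_le_one hj
    have : 1 ≤ hT.weight U i (t j) := hT.one_le_weight hcon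
    have : 1 ≤ hT.weight U j (t i) := hT.one_le_weight fun m hm hmj => by
      rw [hti] at hm
      cases hm
      exact hne (hn.symm.trans hmj)
    have : hT.weight U i (t i) = 0 := by
      have hx : hT.nodeAt U i ≠ n := fun h => hi (by simp [hti, h])
      simp [hti, weight, hx, hn]
    omega

lemma exists_isMatched_comp_perm (U : β) (t : Fin Δ → ν ⊕ β) :
    ∃ σ : Equiv.Perm (Fin Δ), hT.IsMatched U (t ∘ σ) := by
  obtain ⟨σ, hσ⟩ := exists_perm_swap_le fun i j => hT.weight U i (t j)
  exact ⟨σ, hT.isMatched_of_weight_swap_le hσ⟩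

end Matching

section Trunk

variable {U : β} {t : Fin Δ → ν ⊕ β} {i : Fin Δ}

/-- The edges at the blocks through the node of `U` in group `i`, except for the edges from `U` to
its other nodes. -/
def fan (hT : IsTransversalDesign Δ k group adj) (U : β) (i : Fin Δ) : ν → β → Prop :=
  fun n b => adj n b ∧ adj (hT.nodeAt U i) b ∧ (b = U → n = hT.nodeAt U i)

lemma pairwise_disjoint_fan (U : β) : Pairwise (Disjoint on hT.fan U) := by
  intro i j hij
  refine disjoint_rel_iff.2 fun n b hi hj => hij ?_
  by_cases hb : b = U
  · exact hT.nodeAt_injective U ((hi.2.2 hb).symm.trans (hj.2.2 hb))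
  · exact hT.eq_of_adj_nodeAt hb hi.2.1 hj.2.1

lemma edist_fan_le_three {z : ν} (hzU : ¬ adj z U) (hz : group z ≠ i) :
    (bipGraph (hT.fan U i)).edist (.inr U) (.inl z) ≤ 3 := by
  have hx := hT.adj_nodeAt U i
  obtain ⟨b, ⟨hxb, hzb⟩, -⟩ := hT.pairGen (hT.nodeAt U i) z
    (by rw [hT.group_nodeAt]; exact hz.symm)
  have hbU : b ≠ U := by rintro rfl; exact hzU hzb
  calc (bipGraph (hT.fan U i)).edist (.inr U) (.inl z)
      ≤ (bipGraph (hT.fan U i)).edist (.inr U) (.inl (hT.nodeAt U i)) +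
        (bipGraph (hT.fan U i)).edist (.inl (hT.nodeAt U i)) (.inl z) :=
        SimpleGraph.edist_triangle
    _ ≤ 1 + 2 := add_le_add (edist_inr_inl_le_one.2 ⟨hx, hx, fun _ => rfl⟩)
        (edist_inl_inl_le_two ⟨hxb, hxb, fun _ => rfl⟩ ⟨hzb, hxb, fun h => absurd h hbU⟩)
    _ = 3 := by norm_num

/-- The edges reserved for the target `v` matched with the index `i`: those of the shortest path
through the node of `U` in group `i` if `v` is direct, and the whole fan otherwise. -/
def trunk (hT : IsTransversalDesign Δ k group adj) (U : β) (i : Fin Δ) (v : ν ⊕ β) :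
    ν → β → Prop :=
  fun n b => hT.fan U i n b ∧ (hT.IsDirect U i v → n = hT.nodeAt U i ∧ (b = U ∨ v = .inr b))

lemma trunk_le_fan (U : β) (i : Fin Δ) (v : ν ⊕ β) : hT.trunk U i v ≤ hT.fan U i :=
  fun _ _ h => h.1

lemma fan_le_trunk (hi : i ∈ hT.indirect U t) : hT.fan U i ≤ hT.trunk U i (t i) :=
  fun _ _ h => ⟨h, fun hd => absurd hd hi⟩

lemma edist_trunk_le_two {v : ν ⊕ β} (h : hT.IsDirect U i v) :
    (bipGraph (hT.trunk U i v)).edist (.inr U) v ≤ 2 := by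
  have hx := hT.adj_nodeAt U i
  have hUx : (bipGraph (hT.trunk U i v)).edist (.inr U) (.inl (hT.nodeAt U i)) ≤ 1 :=
    edist_inr_inl_le_one.2 ⟨⟨hx, hx, fun _ => rfl⟩, fun _ => ⟨rfl, .inl rfl⟩⟩
  have hxv : (bipGraph (hT.trunk U i v)).edist (.inl (hT.nodeAt U i)) v ≤ 1 := by
    rcases v with n | b
    · exact edist_inl_inl_le_one.2 (hT.isDirect_inl.1 h)
    · have hxb := hT.isDirect_inr.1 h
      exact edist_inl_inr_le_one.2 ⟨⟨hxb, hxb, fun _ => rfl⟩, fun _ => ⟨rfl, .inr rfl⟩⟩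
  calc (bipGraph (hT.trunk U i v)).edist (.inr U) v
      ≤ _ + (bipGraph (hT.trunk U i v)).edist (.inl (hT.nodeAt U i)) v :=
        SimpleGraph.edist_triangle
    _ ≤ 1 + 1 := add_le_add hUx hxv
    _ = 2 := one_add_one_eq_two

lemma isRouting_trunk_sup {F : Fin Δ → ν → β → Prop} (hF_le : ∀ i, F i ≤ adj)
    (hF : Pairwise (Disjoint on F))
    (hF_trunk : Pairwise fun i j => Disjoint (F i) (hT.trunk U j (t j)))
    (hdist : ∀ i ∈ hT.indirect U t,
      (bipGraph (hT.trunk U i (t i) ⊔ F i)).edist (.inr U) (t i) ≤ 7) :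
    IsRouting adj U 7 t fun i => hT.trunk U i (t i) ⊔ F i where
  le_adj i := sup_le (fun _ _ h => h.1.1) (hF_le i)
  disjoint i j hij := by
    refine Disjoint.sup_left (Disjoint.sup_right ?_ ?_) (Disjoint.sup_right ?_ (hF hij))
    · exact (hT.pairwise_disjoint_fan U hij).mono (hT.trunk_le_fan U i _) (hT.trunk_le_fan U j _)
    · exact (hF_trunk hij.symm).symm
    · exact hF_trunk hij
  edist_le i := by
    by_cases hi : i ∈ hT.indirect U t
    · exact hdist i hi
    · calc (bipGraph (hT.trunk U i (t i) ⊔ F i)).edist (.inr U) (t i)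
          ≤ (bipGraph (hT.trunk U i (t i))).edist (.inr U) (t i) :=
            SimpleGraph.edist_anti (bipGraph_mono le_sup_left)
        _ ≤ 2 := hT.edist_trunk_le_two (not_not.1 hi)
        _ ≤ 7 := by norm_num

end Trunk

section SingleIndirect

variable {U : β} {t : Fin Δ → ν ⊕ β} {i : Fin Δ}

/-- The edges which are not reserved for any target other than the indirect target `t i`. -/
def remainder (hT : IsTransversalDesign Δ k group adj) (U : β) (t : Fin Δ → ν ⊕ β) (i : Fin Δ) :
    ν → β → Prop :=
  fun n b => i ∈ hT.indirect U t ∧ adj n b ∧ ∀ j, j ≠ i → ¬ hT.trunk U j (t j) n b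

include hT in
lemma exists_block_edist_le_one_and_not_adj {v : ν ⊕ β} (hv : ¬ hT.IsDirect U i v) :
    ∃ c, (bipGraph adj).edist (.inr c) v ≤ 1 ∧ ¬ adj (hT.nodeAt U i) c := by
  rcases v with n | b
  · rw [isDirect_inl] at hv
    simpa using hT.exists_adj_and_not_adj (Ne.symm hv)
  · exact ⟨b, by simp, hv ∘ hT.isDirect_inr.2⟩

lemma edist_trunk_sup_remainder_le (hM : hT.IsMatched U t)
    (hsub : (hT.indirect U t).Subsingleton) (hi : i ∈ hT.indirect U t) :
    (bipGraph (hT.trunk U i (t i) ⊔ hT.remainder U t i)).edist (.inr U) (t i) ≤ 7 := by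
  set G := bipGraph (hT.trunk U i (t i) ⊔ hT.remainder U t i)
  have hdirect {j : Fin Δ} (hj : j ≠ i) : hT.IsDirect U j (t j) :=
    not_not.1 fun hj' => hj (hsub hj' hi)
  have hoff {n b} (hn : ¬ adj n U) (hnb : adj n b) : hT.remainder U t i n b :=
    ⟨hi, hnb, fun j hj h => hn ((h.2 (hdirect hj)).1 ▸ hT.adj_nodeAt U j)⟩
  obtain ⟨c, hct, hxc⟩ := hT.exists_block_edist_le_one_and_not_adj hi
  have hzU : ¬ adj (hT.nodeAt c i) U := fun h => by
    have hzx := hT.eq_nodeAt h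
    rw [hT.group_nodeAt] at hzx
    exact hxc (hzx ▸ hT.adj_nodeAt c i)
  obtain ⟨g, hg⟩ := hT.exists_group_ne i
  obtain ⟨v, rfl, hvU⟩ := hT.exists_not_adj U g
  obtain ⟨b, ⟨hvb, hzb⟩, -⟩ := hT.pairGen v (hT.nodeAt c i) (by rwa [hT.group_nodeAt])
  have hUv : G.edist (.inr U) (.inl v) ≤ 3 :=
    (SimpleGraph.edist_anti (bipGraph_mono ((hT.fan_le_trunk hi).trans le_sup_left))).trans
      (hT.edist_fan_le_three hvU hg)
  have hvz : G.edist (.inl v) (.inl (hT.nodeAt c i)) ≤ 2 :=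
    edist_inl_inl_le_two (.inr (hoff hvU hvb)) (.inr (hoff hzU hzb))
  have hzc : G.edist (.inl (hT.nodeAt c i)) (.inr c) ≤ 1 :=
    edist_inl_inr_le_one.2 (.inr (hoff hzU (hT.adj_nodeAt c i)))
  have hct' : G.edist (.inr c) (t i) ≤ 1 := by
    rcases hti : t i with n | b
    · rw [hti, edist_inr_inl_le_one] at hct
      refine edist_inr_inl_le_one.2 (.inr ⟨hi, hct, fun j hj h => ?_⟩)
      obtain ⟨rfl, rfl | htj⟩ := h.2 (hdirect hj)
      · exact hxc (hT.adj_nodeAt c i)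
      · exact hM.ne_block hi hti c htj
    · rw [hti, edist_inr_inr_le_one] at hct
      exact edist_inr_inr_le_one.2 hct
  calc G.edist (.inr U) (t i)
      ≤ G.edist (.inr U) (.inl v) + G.edist (.inl v) (.inl (hT.nodeAt c i)) +
        G.edist (.inl (hT.nodeAt c i)) (.inr c) + G.edist (.inr c) (t i) :=
        SimpleGraph.edist_triangle.trans <| add_le_add_left (SimpleGraph.edist_triangle.trans <|
          add_le_add_left SimpleGraph.edist_triangle _) _
    _ ≤ 3 + 2 + 1 + 1 := by gcongr
    _ = 7 := by norm_num

lemma exists_isRouting_of_subsingleton (hM : hT.IsMatched U t)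
    (hsub : (hT.indirect U t).Subsingleton) : ∃ r, IsRouting adj U 7 t r :=
  ⟨_, hT.isRouting_trunk_sup (F := hT.remainder U t) (fun _ _ _ h => h.2.1)
    (fun _ _ hij => disjoint_rel_iff.2 fun _ _ hi hj => hij (hsub hi.1 hj.1))
    (fun _ _ hij => disjoint_rel_iff.2 fun _ _ hi hj => hi.2.2 _ hij.symm hj)
    fun _ hi => hT.edist_trunk_sup_remainder_le hM hsub hi⟩

end SingleIndirect

section Detour

variable {U : β} {t : Fin Δ → ν ⊕ β} {S : Set (Fin Δ)} {c : Fin Δ → β} {g : Fin Δ → Fin Δ}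
  {i : Fin Δ}

/-- For `i ∈ S`, the edges at the block `c i` leading from its node in group `g i` to the target
`t i`. -/
def detour (hT : IsTransversalDesign Δ k group adj) (t : Fin Δ → ν ⊕ β) (S : Set (Fin Δ))
    (c : Fin Δ → β) (g : Fin Δ → Fin Δ) (i : Fin Δ) : ν → β → Prop :=
  fun n b => i ∈ S ∧ b = c i ∧ adj n b ∧ (n = hT.nodeAt (c i) (g i) ∨ t i = .inl n)

lemma edist_trunk_sup_detour_le (hi : i ∈ hT.indirect U t) (hS : i ∈ S) (hg : g i ≠ i)
    (hz : ¬ adj (hT.nodeAt (c i) (g i)) U) (hc : (bipGraph adj).edist (.inr (c i)) (t i) ≤ 1) :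
    (bipGraph (hT.trunk U i (t i) ⊔ hT.detour t S c g i)).edist (.inr U) (t i) ≤ 7 := by
  set G := bipGraph (hT.trunk U i (t i) ⊔ hT.detour t S c g i)
  have hUz : G.edist (.inr U) (.inl (hT.nodeAt (c i) (g i))) ≤ 3 :=
    (SimpleGraph.edist_anti (bipGraph_mono ((hT.fan_le_trunk hi).trans le_sup_left))).trans
      (hT.edist_fan_le_three hz (by rwa [hT.group_nodeAt]))
  have hzc : G.edist (.inl (hT.nodeAt (c i) (g i))) (.inr (c i)) ≤ 1 :=
    edist_inl_inr_le_one.2 (.inr ⟨hS, rfl, hT.adj_nodeAt _ _, .inl rfl⟩)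
  have hct : G.edist (.inr (c i)) (t i) ≤ 1 := by
    rcases hti : t i with n | b
    · rw [hti, edist_inr_inl_le_one] at hc
      exact edist_inr_inl_le_one.2 (.inr ⟨hS, rfl, hc, .inr hti⟩)
    · rw [hti, edist_inr_inr_le_one] at hc
      exact edist_inr_inr_le_one.2 hc
  calc G.edist (.inr U) (t i)
      ≤ G.edist (.inr U) (.inl (hT.nodeAt (c i) (g i))) +
        G.edist (.inl (hT.nodeAt (c i) (g i))) (.inr (c i)) + G.edist (.inr (c i)) (t i) :=
        SimpleGraph.edist_triangle.trans <| add_le_add_left SimpleGraph.edist_triangle _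
    _ ≤ 3 + 1 + 1 := by gcongr
    _ ≤ 7 := by norm_num

lemma disjoint_detour_trunk (hM : hT.IsMatched U t) (hS : S ⊆ hT.indirect U t)
    (hc : ∀ i ∈ S, ∀ j ∈ hT.indirect U t, ¬ adj (hT.nodeAt U j) (c i))
    (hz : ∀ i ∈ S, ¬ adj (hT.nodeAt (c i) (g i)) U) (i j : Fin Δ) :
    Disjoint (hT.detour t S c g i) (hT.trunk U j (t j)) := by
  refine disjoint_rel_iff.2 ?_
  rintro n b ⟨hi, rfl, -, hn⟩ ⟨hfan, hdirect⟩
  by_cases hj : j ∈ hT.indirect U t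
  · exact hc i hi j hj hfan.2.1
  · obtain ⟨rfl, hU | htj⟩ := hdirect (not_not.1 hj)
    · exact hc i hi i (hS hi) (hU ▸ hT.adj_nodeAt U i)
    · rcases hn with hn | hti
      · exact hz i hi (hn ▸ hT.adj_nodeAt U j)
      · exact hM.ne_block (hS hi) hti _ htj

lemma exists_isRouting_of_detour (hM : hT.IsMatched U t) (hS : S ⊆ hT.indirect U t)
    (hfan : ∀ i ∈ hT.indirect U t, i ∉ S → ∃ n, t i = .inl n ∧ group n ≠ i ∧ ¬ adj n U)
    (hc : ∀ i ∈ S, ∀ j ∈ hT.indirect U t, ¬ adj (hT.nodeAt U j) (c i))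
    (hct : ∀ i ∈ S, (bipGraph adj).edist (.inr (c i)) (t i) ≤ 1)
    (hg : ∀ i ∈ S, g i ≠ i) (hz : ∀ i ∈ S, ¬ adj (hT.nodeAt (c i) (g i)) U)
    (hdisj : Pairwise (Disjoint on hT.detour t S c g)) : ∃ r, IsRouting adj U 7 t r := by
  refine ⟨_, hT.isRouting_trunk_sup (F := hT.detour t S c g) (fun _ _ _ h => h.2.2.1) hdisj
    (fun i j _ => hT.disjoint_detour_trunk hM hS hc hz i j) fun i hi => ?_⟩
  by_cases hiS : i ∈ S
  · exact hT.edist_trunk_sup_detour_le hi hiS (hg i hiS) (hz i hiS) (hct i hiS)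
  · obtain ⟨n, hti, hn, hnU⟩ := hfan i hi hiS
    calc (bipGraph (hT.trunk U i (t i) ⊔ hT.detour t S c g i)).edist (.inr U) (t i)
        ≤ (bipGraph (hT.fan U i)).edist (.inr U) (t i) :=
          SimpleGraph.edist_anti (bipGraph_mono ((hT.fan_le_trunk hi).trans le_sup_left))
      _ ≤ 3 := by rw [hti]; exact hT.edist_fan_le_three hnU hn
      _ ≤ 7 := by norm_num

lemma exists_isRouting_of_group_eq (hM : hT.IsMatched U t) (hΔk : Δ ≤ k)
    (hi : i ∈ hT.indirect U t) {w : ν} (hw : t i = .inl w) (hwi : group w = i) :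
    ∃ r, IsRouting adj U 7 t r := by
  have hoff : ∀ j ∈ hT.indirect U t, ∀ n, t j = .inl n → group n = i → ¬ adj n U := by
    rintro j hj n htj rfl hnU
    exact hM.not_isDirect hj hi (by rw [htj, isDirect_inl]; exact (hT.eq_nodeAt hnU).symm)
  obtain ⟨c, hwc, hc⟩ := hT.exists_block_disjoint_of_not_adj hΔk (hoff i hi w hw hwi)
  obtain ⟨g, hg⟩ := hT.exists_group_ne i
  refine hT.exists_isRouting_of_detour (S := {i}) (c := fun _ => c) (g := fun _ => g) hM
    (Set.singleton_subset_iff.2 hi) ?_ (fun _ _ j _ => hc j) ?_ ?_ ?_ ?_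
  · intro j hj hji
    obtain ⟨n, htj, hn⟩ := hM.group_eq hi hw hwi j hj
    exact ⟨n, htj, fun h => hji (h.symm.trans hn), hoff j hj n htj hn⟩
  · rintro _ rfl
    simpa [hw] using hwc
  · rintro _ rfl
    exact hg
  · intro _ _ hzU
    exact hc _ (hT.eq_nodeAt hzU ▸ hT.adj_nodeAt c g)
  · exact fun j l hjl => disjoint_rel_iff.2 fun _ _ hj hl => hjl (hj.1.trans hl.1.symm)

/-- The indices of the indirect targets that are blocks or nodes of `U`. -/
def detoured (hT : IsTransversalDesign Δ k group adj) (U : β) (t : Fin Δ → ν ⊕ β) :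
    Set (Fin Δ) :=
  {i ∈ hT.indirect U t | ∀ n, t i = .inl n → adj n U}

lemma exists_detour_blocks (hM : hT.IsMatched U t) (hΔk : Δ ≤ k) :
    ∃ c : Fin Δ → β, (∀ i ∈ hT.detoured U t, (bipGraph adj).edist (.inr (c i)) (t i) ≤ 1) ∧
      (∀ i ∈ hT.detoured U t, ∀ j ∈ hT.indirect U t, ¬ adj (hT.nodeAt U j) (c i)) ∧
      ∀ i j n, t i = .inl n → t j = .inl n → c i = c j → i = j := by
  choose f hf_inj hfU hf_adj using
    fun g : Fin Δ => hT.exists_injective_blocks hΔk (hT.adj_nodeAt U g) g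
  have hnode {i n} (hi : i ∈ hT.detoured U t) (hti : t i = .inl n) :
      n = hT.nodeAt U (group n) := hT.eq_nodeAt (hi.2 n hti)
  refine ⟨fun i => Sum.elim (fun n => f (group n) i) id (t i), fun i hi => ?_,
    fun i hi j hj hadj => ?_, fun i j n hti htj hij => ?_⟩
  · rcases hti : t i with n | b
    · have hn := hf_adj (group n) i
      rw [← hnode hi hti] at hn
      simpa [hti] using hn
    · simp [hti]
  · have hd := hM.not_isDirect hi.1 hj
    have hii : ¬ hT.IsDirect U i (t i) := hi.1
    rcases hti : t i with n | b
    · rw [hti, isDirect_inl, hnode hi hti] at hd hii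
      simp only [hti, Sum.elim_inl] at hadj
      have hU : f (group n) i ≠ U := fun h =>
        hii (congrArg _ (hf_inj _ (h.trans (hfU (group n)).symm)))
      exact hd (congrArg _ (hT.eq_of_adj_nodeAt hU hadj (hf_adj (group n) i)))
    · rw [hti, isDirect_inr] at hd
      simp only [hti, Sum.elim_inr, id] at hadj
      exact hd hadj
  · simp only [hti, htj, Sum.elim_inl] at hij
    exact hf_inj _ hij

lemma exists_isRouting_of_nontrivial (hM : hT.IsMatched U t) (hΔk : Δ ≤ k)
    (hgroup : ∀ i ∈ hT.indirect U t, ∀ n, t i = .inl n → group n ≠ i)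
    (hnon : (hT.indirect U t).Nontrivial) : ∃ r, IsRouting adj U 7 t r := by
  obtain ⟨ρ, hρ⟩ := exists_perm_mem_and_ne (Set.to_countable _) hnon
  obtain ⟨c, hct, hc, hc_inj⟩ := hT.exists_detour_blocks hM hΔk
  have hz : ∀ i ∈ hT.detoured U t, ¬ adj (hT.nodeAt (c i) (ρ i)) U := fun i hi hzU => by
    have hzx := hT.eq_nodeAt hzU
    rw [hT.group_nodeAt] at hzx
    exact hc i hi (ρ i) (hρ i hi.1).1 (hzx ▸ hT.adj_nodeAt (c i) (ρ i))
  refine hT.exists_isRouting_of_detour (S := hT.detoured U t) (g := ρ) hM (fun _ hi => hi.1) ?_ hc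
    hct (fun i hi => (hρ i hi.1).2) hz ?_
  · intro i hi hiS
    have : ∃ n, t i = .inl n ∧ ¬ adj n U := by
      by_contra! hall
      exact hiS ⟨hi, hall⟩
    obtain ⟨n, hti, hnU⟩ := this
    exact ⟨n, hti, hgroup i hi n hti, hnU⟩
  · intro i j hij
    refine disjoint_rel_iff.2 ?_
    rintro n _ ⟨hi, rfl, -, hni⟩ ⟨hj, hcij, -, hnj⟩
    rcases hni with rfl | hti <;> rcases hnj with hnj | htj
    · have hρij := congrArg group hnj
      rw [hT.group_nodeAt, hT.group_nodeAt] at hρij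
      exact hij (ρ.injective hρij)
    · exact hz i hi (hj.2 _ htj)
    · exact hz j hj (hnj ▸ hi.2 n hti)
    · exact hij (hc_inj i j n hti htj hcij)

end Detour

end IsTransversalDesign

/-- Let `T` be a `[Δ,k]`-transversal design with `Δ ≤ k`.  Let `U` be
any block and let `t 1, …, t Δ` be any `Δ` vertices of `T` (each a node or a block,
possibly with repetitions).  Then for each `i` there is a path `p i` from `U` to
`t i` of length at most `7`, so that these paths are pairwise edge-disjoint. -/
theorem transversalDesign_one_to_many_edgeDisjoint {ν β : Type} (Δ k : ℕ)
    (hΔk : Δ ≤ k)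
    (group : ν → Fin Δ) (adj : ν → β → Prop)
    (hT : IsTransversalDesign Δ k group adj)
    (U : β) (t : Fin Δ → ν ⊕ β) :
    ∃ p : (i : Fin Δ) → (bipGraph adj).Walk (Sum.inr U) (t i),
      (∀ i, (p i).IsPath ∧ (p i).length ≤ 7) ∧ PairwiseEdgeDisjoint p := by
  obtain ⟨σ, hM⟩ := hT.exists_isMatched_comp_perm U t
  suffices h : ∃ r, IsRouting adj U 7 (t ∘ σ) r from h.choose_spec.of_comp_perm.exists_paths
  rcases (hT.indirect U (t ∘ σ)).subsingleton_or_nontrivial with hsub | hnon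
  · exact hT.exists_isRouting_of_subsingleton hM hsub
  by_cases hgroup : ∃ i ∈ hT.indirect U (t ∘ σ), ∃ w, (t ∘ σ) i = .inl w ∧ group w = i
  · obtain ⟨i, hi, w, hw, hwi⟩ := hgroup
    exact hT.exists_isRouting_of_group_eq hM hΔk hi hw hwi
  · push Not at hgroup
    exact hT.exists_isRouting_of_nontrivial hM hΔk hgroup hnon
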